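/- arXiv:0905.1118 — 2 statements merged into one kernel-verified Lean document; each statement's English description precedes it below -/
import Mathlib

section
/- Let G be a group with finite symmetric generating set Γ acting partially on a set S. If ε > 0 and μ is a weighted ε-Følner set, then the support of μ contains a Γ-connected component A such that the restriction μ↾A is a weighted ε-Følner set. -/
/-- A partial (right) action of a group `G` on a set `S`: a partial function
`S × G → S` (encoded with `Option`) such that `x·1 = x`, `x·g = y ↔ x = y·g⁻¹`,
and `x·(gh) = (x·g)·h` whenever all the quantities involved are defined. -/
structure PartialAction (G : Type*) [Group G] (S : Type*) where
  act : S → G → Option S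
  act_one : ∀ x, act x 1 = some x
  act_inv : ∀ (x y : S) (g : G), act x g = some y ↔ act y g⁻¹ = some x
  act_mul : ∀ (x y z w : S) (g h : G),
    act x g = some y → act y h = some z → act x (g * h) = some w → w = z

/-- Extension of a weight function to `Option`, with the convention that
undefined values get weight `0`. -/
def optApply {S : Type*} (μ : S → ℝ) : Option S → ℝ
  | none => 0
  | some s => μ s

/-- `μ` is a weighted `ε`-Følner set for the partial action `P` with respect to `Γ`:
`μ` is nonnegative with finite support and
`∑ γ ∈ Γ, ∑ s, |μ(s·γ) − μ(s)| < ε · ∑ s, μ(s)`. -/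
def IsWeightedFolner {G S : Type*} [Group G] (P : PartialAction G S)
    (Γ : Finset G) (ε : ℝ) (μ : S → ℝ) : Prop :=
  (Function.support μ).Finite ∧ (∀ s, 0 ≤ μ s) ∧
    ∑ γ ∈ Γ, ∑ᶠ s, |optApply μ (P.act s γ) - μ s| < ε * ∑ᶠ s, μ s

/-- A set `A ⊆ S` is `Γ`-connected if any two of its points are joined by a chain of
moves by generators in `Γ`, all of whose intermediate points are defined and lie in `A`. -/
def GammaConnected {G S : Type*} [Group G] (P : PartialAction G S)
    (Γ : Finset G) (A : Set S) : Prop :=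
  ∀ x ∈ A, ∀ y ∈ A, ∃ (l : ℕ) (c : ℕ → S), c 0 = x ∧ c l = y ∧
    (∀ i ≤ l, c i ∈ A) ∧ ∀ i < l, ∃ γ ∈ Γ, P.act (c i) γ = some (c (i + 1))

/-- `A` is a `Γ`-connected component of `B`: a maximal `Γ`-connected subset of `B`. -/
def IsGammaComponent {G S : Type*} [Group G] (P : PartialAction G S)
    (Γ : Finset G) (B A : Set S) : Prop :=
  A ⊆ B ∧ GammaConnected P Γ A ∧
    ∀ A' : Set S, A ⊆ A' → A' ⊆ B → GammaConnected P Γ A' → A' = A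

/-!
Both the mass `∑ μ` and the variation `∑ γ, ∑ s, |μ (s·γ) - μ s|` are additive over the
decomposition of `μ` into its restrictions to the connected components of its support. For the
variation the point is that a generator never moves a point of one component to a point of
another, so in each term `|μ (s·γ) - μ s|` the contributions of the components all have the same
sign. Averaging over the components then gives one whose variation is less than `ε` times its mass.
-/

theorem abs_sum_sub_sum_of_noncrossing {ι α : Type*} [AddCommGroup α] [LinearOrder α]
    [IsOrderedAddMonoid α] {F : Finset ι} {a b : ι → α} (ha : ∀ i ∈ F, 0 ≤ a i)
    (hb : ∀ i ∈ F, 0 ≤ b i) (hab : ∀ i ∈ F, ∀ j ∈ F, a i ≠ 0 → b j ≠ 0 → i = j) :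
    |∑ i ∈ F, a i - ∑ i ∈ F, b i| = ∑ i ∈ F, |a i - b i| := by
  by_cases hle : ∀ i ∈ F, a i ≤ b i
  · rw [abs_sub_comm, ← Finset.sum_sub_distrib,
      Finset.abs_sum_of_nonneg fun i hi => sub_nonneg.2 (hle i hi)]
    exact Finset.sum_congr rfl fun i hi => by
      rw [abs_sub_comm, abs_of_nonneg (sub_nonneg.2 (hle i hi))]
  · push Not at hle
    obtain ⟨i, hi, hlt⟩ := hle
    have hge : ∀ j ∈ F, b j ≤ a j := by
      intro j hj
      by_contra! hlt'
      obtain rfl := hab i hi j hj ((hb i hi).trans_lt hlt).ne' ((ha j hj).trans_lt hlt').ne'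
      exact hlt.not_gt hlt'
    rw [← Finset.sum_sub_distrib, Finset.abs_sum_of_nonneg fun j hj => sub_nonneg.2 (hge j hj)]
    exact Finset.sum_congr rfl fun j hj => (abs_of_nonneg (sub_nonneg.2 (hge j hj))).symm

theorem exists_nat_chain_of_reflTransGen {α : Type*} {r : α → α → Prop} {x y : α}
    (h : Relation.ReflTransGen r x y) :
    ∃ (l : ℕ) (c : ℕ → α), c 0 = x ∧ c l = y ∧ ∀ i < l, r (c i) (c (i + 1)) := by
  induction h using Relation.ReflTransGen.head_induction_on with
  | refl => exact ⟨0, fun _ => y, rfl, rfl, fun i hi => absurd hi i.not_lt_zero⟩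
  | @head a b hab _ ih =>
    obtain ⟨l, c, rfl, hl, hc⟩ := ih
    refine ⟨l + 1, fun i => Nat.casesOn i a c, rfl, hl, ?_⟩
    rintro (_ | i) hi
    · exact hab
    · exact hc i (Nat.lt_of_succ_lt_succ hi)

theorem optApply_nonneg {S : Type*} {μ : S → ℝ} (hμ : ∀ s, 0 ≤ μ s) : ∀ o, 0 ≤ optApply μ o
  | none => le_rfl
  | some s => hμ s

theorem optApply_sum {ι S : Type*} (F : Finset ι) (ν : ι → S → ℝ) (o : Option S) :
    optApply (∑ i ∈ F, ν i) o = ∑ i ∈ F, optApply (ν i) o := by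
  cases o with
  | none => exact Finset.sum_const_zero.symm
  | some s => exact Finset.sum_apply s F ν

theorem optApply_ne_zero_iff {S : Type*} {μ : S → ℝ} {o : Option S} :
    optApply μ o ≠ 0 ↔ ∃ s, μ s ≠ 0 ∧ o = some s := by
  cases o <;> simp [optApply]

namespace PartialAction

variable {G S : Type*} [Group G] (P : PartialAction G S) (Γ : Finset G)

section Variation

/-- The left-hand side `∑ γ ∈ Γ, ∑ s, |μ(s·γ) − μ(s)|` of the Følner condition. It has its intended
value only for `μ` of finite support, since `∑ᶠ` is `0` on functions of infinite support. -/
noncomputable def variation (μ : S → ℝ) : ℝ :=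
  ∑ γ ∈ Γ, ∑ᶠ s, |optApply μ (P.act s γ) - μ s|

theorem finite_support_abs_optApply_act_sub (γ : G) {μ : S → ℝ}
    (hμ : (Function.support μ).Finite) :
    (Function.support fun s => |optApply μ (P.act s γ) - μ s|).Finite := by
  have hinj : Set.InjOn (P.act · γ) ((P.act · γ) ⁻¹' (some '' Function.support μ)) := by
    rintro s ⟨t, -, hst⟩ s' - hss'
    have hs : P.act t γ⁻¹ = some s := (P.act_inv s t γ).1 hst.symm
    have hs' : P.act t γ⁻¹ = some s' := (P.act_inv s' t γ).1 (hss'.symm.trans hst.symm)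
    exact Option.some_injective S (hs.symm.trans hs')
  refine (((hμ.image some).preimage hinj).union hμ).subset fun s hs => ?_
  by_contra hout
  rw [Set.mem_union, not_or] at hout
  obtain ⟨hact, hs0⟩ := hout
  have hact0 : optApply μ (P.act s γ) = 0 := by
    by_contra hne
    obtain ⟨t, ht, hst⟩ := optApply_ne_zero_iff.1 hne
    exact hact ⟨t, ht, hst.symm⟩
  exact hs (by simp [hact0, Function.notMem_support.1 hs0])

variable {P Γ}

theorem variation_sum_of_noncrossing {ι : Type*} {F : Finset ι} {ν : ι → S → ℝ}
    (hfin : ∀ i ∈ F, (Function.support (ν i)).Finite) (hnonneg : ∀ i ∈ F, ∀ s, 0 ≤ ν i s)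
    (hcross : ∀ i ∈ F, ∀ j ∈ F, ∀ γ ∈ Γ, ∀ s t, P.act s γ = some t →
      ν i t ≠ 0 → ν j s ≠ 0 → i = j) :
    P.variation Γ (∑ i ∈ F, ν i) = ∑ i ∈ F, P.variation Γ (ν i) := by
  have hpointwise : ∀ γ ∈ Γ, ∀ s,
      |optApply (∑ i ∈ F, ν i) (P.act s γ) - (∑ i ∈ F, ν i) s| =
        ∑ i ∈ F, |optApply (ν i) (P.act s γ) - ν i s| := by
    intro γ hγ s
    rw [optApply_sum, Finset.sum_apply]
    refine abs_sum_sub_sum_of_noncrossing (fun i hi => optApply_nonneg (hnonneg i hi) _)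
      (fun i hi => hnonneg i hi s) fun i hi j hj hact hs => ?_
    obtain ⟨t, ht, hst⟩ := optApply_ne_zero_iff.1 hact
    exact hcross i hi j hj γ hγ s t hst ht hs
  simp only [variation]
  rw [Finset.sum_comm]
  refine Finset.sum_congr rfl fun γ hγ => ?_
  rw [finsum_congr (hpointwise γ hγ)]
  exact finsum_sum_comm F _ fun i hi => P.finite_support_abs_optApply_act_sub γ (hfin i hi)

end Variation

section Component

/-- A move by a generator in `Γ` both of whose endpoints lie in `B`; chains of such moves are the
chains in the definition of `GammaConnected`. -/
def StepIn (B : Set S) (x y : S) : Prop :=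
  x ∈ B ∧ y ∈ B ∧ ∃ γ ∈ Γ, P.act x γ = some y

/-- The points reachable from `x` by moves inside `B`. For symmetric `Γ` and `x ∈ B` this is the
`Γ`-connected component of `B` containing `x`; for `x ∉ B` it is `{x}`. -/
def component (B : Set S) (x : S) : Set S :=
  {y | Relation.ReflTransGen (P.StepIn Γ B) x y}

variable {P Γ} {A B : Set S} {x y : S}

theorem StepIn.mono (hAB : A ⊆ B) (h : P.StepIn Γ A x y) : P.StepIn Γ B x y :=
  ⟨hAB h.1, hAB h.2.1, h.2.2⟩

theorem reflTransGen_stepIn_symm (hsymm : ∀ γ ∈ Γ, γ⁻¹ ∈ Γ)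
    (h : Relation.ReflTransGen (P.StepIn Γ B) x y) :
    Relation.ReflTransGen (P.StepIn Γ B) y x :=
  have : Std.Symm (P.StepIn Γ B) := ⟨fun x y ⟨hx, hy, γ, hγ, hxy⟩ =>
    ⟨hy, hx, γ⁻¹, hsymm γ hγ, (P.act_inv x y γ).1 hxy⟩⟩
  symm_of (Relation.ReflTransGen (P.StepIn Γ B)) h

theorem gammaConnected_iff_reflTransGen :
    GammaConnected P Γ A ↔ ∀ x ∈ A, ∀ y ∈ A, Relation.ReflTransGen (P.StepIn Γ A) x y := by
  refine forall₂_congr fun x _ => forall₂_congr fun y hy => ⟨?_, fun h => ?_⟩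
  · rintro ⟨l, c, rfl, rfl, hmem, hstep⟩
    exact (reflTransGen_of_succ_of_le (fun i j => P.StepIn Γ A (c i) (c j))
      (fun i hi => ⟨hmem i hi.2.le, hmem (i + 1) hi.2, hstep i hi.2⟩) l.zero_le).lift c
      fun _ _ => id
  · obtain ⟨l, c, h0, rfl, hstep⟩ := exists_nat_chain_of_reflTransGen h
    refine ⟨l, c, h0, rfl, fun i hi => ?_, fun i hi => (hstep i hi).2.2⟩
    obtain rfl | hlt := hi.eq_or_lt
    exacts [hy, (hstep i hlt).1]

theorem mem_component_self : x ∈ P.component Γ B x :=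
  .refl

theorem component_subset (hx : x ∈ B) : P.component Γ B x ⊆ B := by
  rintro y (_ | ⟨-, hstep⟩)
  exacts [hx, hstep.2.1]

theorem component_eq_of_mem (hsymm : ∀ γ ∈ Γ, γ⁻¹ ∈ Γ) (hy : y ∈ P.component Γ B x) :
    P.component Γ B x = P.component Γ B y :=
  Set.ext fun _ => ⟨(reflTransGen_stepIn_symm hsymm hy).trans, Relation.ReflTransGen.trans hy⟩

theorem reflTransGen_stepIn_component (hy : y ∈ P.component Γ B x) :
    Relation.ReflTransGen (P.StepIn Γ (P.component Γ B x)) x y := by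
  induction hy with
  | refl => exact .refl
  | tail hreach hstep ih => exact ih.tail ⟨hreach, hreach.tail hstep, hstep.2.2⟩

theorem isGammaComponent_component (hsymm : ∀ γ ∈ Γ, γ⁻¹ ∈ Γ) (hx : x ∈ B) :
    IsGammaComponent P Γ B (P.component Γ B x) := by
  refine ⟨component_subset hx, gammaConnected_iff_reflTransGen.2 fun y hy z hz => ?_,
    fun A' hsub hA'B hconn => Set.Subset.antisymm (fun y hy => ?_) hsub⟩
  · exact (reflTransGen_stepIn_symm hsymm (reflTransGen_stepIn_component hy)).trans
      (reflTransGen_stepIn_component hz)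
  · have hreach := gammaConnected_iff_reflTransGen.1 hconn x (hsub mem_component_self) y hy
    exact Relation.ReflTransGen.mono (fun _ _ => StepIn.mono hA'B) x y hreach

theorem eq_component_of_mem_image (hsymm : ∀ γ ∈ Γ, γ⁻¹ ∈ Γ) (hA : A ∈ P.component Γ B '' B)
    (hy : y ∈ A) : A = P.component Γ B y := by
  obtain ⟨x, -, rfl⟩ := hA
  exact component_eq_of_mem hsymm hy

theorem component_eq_of_act_eq_some (hsymm : ∀ γ ∈ Γ, γ⁻¹ ∈ Γ) {γ : G} (hγ : γ ∈ Γ)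
    (hxy : P.act x γ = some y) (hx : x ∈ B) (hy : y ∈ B) :
    P.component Γ B x = P.component Γ B y :=
  component_eq_of_mem hsymm (.single ⟨hx, hy, γ, hγ, hxy⟩)

theorem pairwiseDisjoint_image_component (hsymm : ∀ γ ∈ Γ, γ⁻¹ ∈ Γ) :
    (P.component Γ B '' B).PairwiseDisjoint id := by
  refine fun A hA A' hA' hne => Set.disjoint_left.2 fun y hy hy' => hne ?_
  rw [eq_component_of_mem_image hsymm hA hy, eq_component_of_mem_image hsymm hA' hy']

theorem biUnion_image_component : ⋃ A ∈ P.component Γ B '' B, A = B := by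
  rw [Set.biUnion_image]
  exact Set.Subset.antisymm (Set.iUnion₂_subset fun _ => component_subset)
    fun x hx => Set.mem_biUnion hx mem_component_self

theorem sum_indicator_component {M : Type*} [AddCommMonoid M] (hsymm : ∀ γ ∈ Γ, γ⁻¹ ∈ Γ)
    (hB : B.Finite) (f : S → M) :
    ∑ A ∈ (hB.image (P.component Γ B)).toFinset, A.indicator f = B.indicator f := by
  have hdisj : ((hB.image (P.component Γ B)).toFinset : Set (Set S)).PairwiseDisjoint id := by
    rw [Set.Finite.coe_toFinset]
    exact pairwiseDisjoint_image_component hsymm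
  have hunion : ⋃ A ∈ (hB.image (P.component Γ B)).toFinset, A = B := by
    simpa only [Set.Finite.mem_toFinset] using biUnion_image_component
  ext s
  rw [Finset.sum_apply, ← Finset.indicator_biUnion_apply _ (fun A => A) hdisj, hunion]

end Component

end PartialAction

section

variable {G S : Type*} [Group G] {P : PartialAction G S} {Γ : Finset G}

theorem IsWeightedFolner.exists_of_sum_of_noncrossing {ε : ℝ} {ι : Type*} {F : Finset ι}
    {ν : ι → S → ℝ} (h : IsWeightedFolner P Γ ε (∑ i ∈ F, ν i))
    (hnonneg : ∀ i ∈ F, ∀ s, 0 ≤ ν i s)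
    (hcross : ∀ i ∈ F, ∀ j ∈ F, ∀ γ ∈ Γ, ∀ s t, P.act s γ = some t →
      ν i t ≠ 0 → ν j s ≠ 0 → i = j) :
    ∃ i ∈ F, IsWeightedFolner P Γ ε (ν i) := by
  obtain ⟨hsupp, -, hlt⟩ := h
  have hfin : ∀ i ∈ F, (Function.support (ν i)).Finite := by
    refine fun i hi => hsupp.subset fun s hs hsum => hs ?_
    rw [Finset.sum_apply] at hsum
    exact (Finset.sum_eq_zero_iff_of_nonneg fun j hj => hnonneg j hj s).1 hsum i hi
  have hmass : ∑ᶠ s, (∑ i ∈ F, ν i) s = ∑ i ∈ F, ∑ᶠ s, ν i s := by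
    simp only [Finset.sum_apply]
    exact finsum_sum_comm F (fun s i => ν i s) hfin
  have hsum : ∑ i ∈ F, P.variation Γ (ν i) < ∑ i ∈ F, ε * ∑ᶠ s, ν i s := by
    rw [← PartialAction.variation_sum_of_noncrossing hfin hnonneg hcross, ← Finset.mul_sum,
      ← hmass]
    exact hlt
  obtain ⟨i, hi, hlti⟩ := Finset.exists_lt_of_sum_lt hsum
  exact ⟨i, hi, hfin i hi, hnonneg i hi, hlti⟩

theorem weighted_folner_connected_component_general (hsymm : ∀ γ ∈ Γ, γ⁻¹ ∈ Γ) {ε : ℝ}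
    {μ : S → ℝ} (hμ : IsWeightedFolner P Γ ε μ) :
    ∃ A : Set S, IsGammaComponent P Γ (Function.support μ) A ∧
      IsWeightedFolner P Γ ε (Set.indicator A μ) := by
  have hsum : IsWeightedFolner P Γ ε
      (∑ A ∈ (hμ.1.image (P.component Γ (Function.support μ))).toFinset, A.indicator μ) := by
    rwa [PartialAction.sum_indicator_component hsymm hμ.1, Set.indicator_support]
  obtain ⟨A, hA, hAfolner⟩ := hsum.exists_of_sum_of_noncrossing
    (fun A _ => Set.indicator_nonneg fun s _ => hμ.2.1 s) fun A hA A' hA' γ hγ s t hst ht hs => by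
      rw [Set.Finite.mem_toFinset] at hA hA'
      rw [Set.indicator_apply_ne_zero] at ht hs
      rw [PartialAction.eq_component_of_mem_image hsymm hA ht.1,
        PartialAction.eq_component_of_mem_image hsymm hA' hs.1,
        PartialAction.component_eq_of_act_eq_some hsymm hγ hst hs.2 ht.2]
  obtain ⟨x, hx, rfl⟩ := (Set.Finite.mem_toFinset _).1 hA
  exact ⟨_, PartialAction.isGammaComponent_component hsymm hx, hAfolner⟩

end

/-- If `ε > 0` and `μ` is a weighted `ε`-Følner set, then the support of `μ` contains a
`Γ`-connected component `A` such that `μ↾A` is a weighted `ε`-Følner set. -/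
theorem weighted_folner_connected_component {G S : Type*} [Group G]
    (Γ : Finset G)
    (hsymm : ∀ γ ∈ Γ, γ⁻¹ ∈ Γ)
    (hgen : Subgroup.closure (Γ : Set G) = ⊤)
    (P : PartialAction G S)
    (ε : ℝ) (hε : 0 < ε) (μ : S → ℝ) (hμ : IsWeightedFolner P Γ ε μ) :
    ∃ A : Set S, IsGammaComponent P Γ (Function.support μ) A ∧
      IsWeightedFolner P Γ ε (Set.indicator A μ) :=
  weighted_folner_connected_component_general hsymm hμ
end

section
/- Let T, W ∈ 𝒯 with W contained in T. If W contains extensions of both ⟨0,1⟩ and ⟨1,0⟩, and 2|T/u| ≤ |T/v| holds for all interior elements u <_lex v of W, then |T/⟨0,1⟩| < |T/⟨1,0⟩|. -/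
/-- The (strict) lexicographic order on finite binary sequences, with `false < true`. -/
def lexLt (u v : List Bool) : Prop := List.Lex (· < ·) u v

/-- `t` is an initial segment of the infinite binary sequence `x`. -/
def StreamPrefix (t : List Bool) (x : ℕ → Bool) : Prop :=
  ∀ i : Fin t.length, t.get i = x i

/-- `T` is a finite rooted binary tree, identified with the (finite) set of addresses of
its leaves: every infinite binary sequence has a unique initial segment in `T`. -/
def IsTree (T : Finset (List Bool)) : Prop :=
  ∀ x : ℕ → Bool, ∃! t, t ∈ T ∧ StreamPrefix t x

/-- `U` is contained in `V`: every element of `U` has an extension in `V`. -/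
def ContainedIn (U V : Finset (List Bool)) : Prop :=
  ∀ u ∈ U, ∃ v ∈ V, u <+: v

/-- `T/u = {s : u⌢s ∈ T}`. -/
def treeQuot (T : Finset (List Bool)) (u : List Bool) : Finset (List Bool) :=
  (T.filter (fun t => u <+: t)).image (fun t => t.drop u.length)

/-- `u` is an interior element of `T`: an element of `T` which is neither the
lexicographically least nor the lexicographically greatest element of `T`. -/
def IsInterior (T : Finset (List Bool)) (u : List Bool) : Prop :=
  u ∈ T ∧ (∃ a ∈ T, lexLt a u) ∧ (∃ b ∈ T, lexLt u b)

/-- `U` satisfies the defining conditions for `∂T`: `U` is a tree contained in `T`;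
(1) `U` contains extensions of both `⟨0,1⟩` and `⟨1,0⟩`;
(2) either `2|T/u| ≤ |T/v|` for all interior `u <_lex v` of `U`, or `2|T/v| ≤ |T/u|`
for all interior `u <_lex v` of `U`;
(3) the minimum interior element of `U` ends with `1` and the maximum interior element
of `U` ends with `0`. -/
def DefCondDT (T U : Finset (List Bool)) : Prop :=
  IsTree U ∧ ContainedIn U T ∧
  (∃ u ∈ U, [false, true] <+: u) ∧ (∃ u ∈ U, [true, false] <+: u) ∧
  ((∀ u v, IsInterior U u → IsInterior U v → lexLt u v →
      2 * (treeQuot T u).card ≤ (treeQuot T v).card) ∨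
   (∀ u v, IsInterior U u → IsInterior U v → lexLt u v →
      2 * (treeQuot T v).card ≤ (treeQuot T u).card)) ∧
  (∀ u, IsInterior U u → (∀ v, IsInterior U v → ¬ lexLt v u) → u.getLast? = some true) ∧
  (∀ u, IsInterior U u → (∀ v, IsInterior U v → ¬ lexLt u v) → u.getLast? = some false)

/-!
The elements of `W` extending `⟨0,1⟩` or `⟨1,0⟩` lie strictly between the endpoints of `W`, so the
doubling hypothesis applies to them. Those extending `⟨0,1⟩` cut `T/⟨0,1⟩` into the pieces `T/w`,
whose sizes at least double from left to right; as in `1 + 2 + ⋯ + 2ⁿ < 2ⁿ⁺¹`, their total is less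
than `|T/v|` for any later interior `v`. Taking `v ∈ W` extending `⟨1,0⟩` gives
`|T/⟨0,1⟩| < |T/v| ≤ |T/⟨1,0⟩|`. The same argument compares any address `p` having a digit `1` with
any address `q` having a digit `0` such that `p` branches off to the left of `q`.
-/

theorem sum_lt_of_two_nsmul_le {ι M : Type*} [LinearOrder ι] [AddCommMonoid M] [PartialOrder M]
    [IsOrderedCancelAddMonoid M] {f : ι → M} {s : Set ι} (hpos : ∀ i ∈ s, 0 < f i)
    (hdouble : ∀ i ∈ s, ∀ j ∈ s, i < j → 2 • f i ≤ f j) {S : Finset ι} (hS : ∀ i ∈ S, i ∈ s)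
    {j : ι} (hj : j ∈ s) (hlt : ∀ i ∈ S, i < j) : ∑ i ∈ S, f i < f j := by
  induction S using Finset.induction_on_max generalizing j with
  | empty => simpa using hpos j hj
  | insert m S hmax ih =>
    rw [Finset.forall_mem_insert] at hS hlt
    calc ∑ i ∈ insert m S, f i
        = f m + ∑ i ∈ S, f i := Finset.sum_insert fun hm => (hmax m hm).false
      _ < f m + f m := by gcongr; exact ih hS.2 hS.1 hmax
      _ = 2 • f m := (two_nsmul _).symm
      _ ≤ f j := hdouble m hS.1 j hj hlt.1

section Lex

variable {u v w : List Bool}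

theorem lexLt_of_prefix_of_prefix {p q : List Bool} (hlt : lexLt p q) (hpq : ¬ p <+: q)
    (hu : p <+: u) (hv : q <+: v) : lexLt u v := by
  obtain ⟨r, rfl⟩ := hu
  obtain ⟨s, rfl⟩ := hv
  induction hlt with
  | nil => exact absurd List.nil_prefix hpq
  | cons _ ih => exact List.Lex.cons (ih fun h => hpq (List.cons_prefix_cons.2 ⟨rfl, h⟩))
  | rel hab => exact List.Lex.rel hab

theorem replicate_false_lexLt (n : ℕ) (hw : true ∈ w) : lexLt (List.replicate n false) w := by
  induction n generalizing w with
  | zero =>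
    obtain ⟨b, w, rfl⟩ := List.exists_cons_of_ne_nil (List.ne_nil_of_mem hw)
    exact List.Lex.nil
  | succ n ih =>
    match w, hw with
    | true :: _, _ => exact List.Lex.rel Bool.false_lt_true
    | false :: w, hw => exact List.Lex.cons (ih (by simpa using hw))

theorem lexLt_replicate_true {n : ℕ} (hw : ¬ List.replicate n true <+: w) :
    lexLt w (List.replicate n true) := by
  induction n generalizing w with
  | zero => exact absurd List.nil_prefix hw
  | succ n ih =>
    match w with
    | [] => exact List.Lex.nil
    | false :: _ => exact List.Lex.rel Bool.false_lt_true
    | true :: w => exact List.Lex.cons (ih fun h => hw (List.cons_prefix_cons.2 ⟨rfl, h⟩))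

end Lex

section StreamPrefix

variable {u v : List Bool} {x : ℕ → Bool}

theorem StreamPrefix.of_prefix (hv : StreamPrefix v x) (h : u <+: v) : StreamPrefix u x := by
  intro i
  simpa [h.getElem i.isLt] using hv ⟨i, i.isLt.trans_le h.length_le⟩

theorem StreamPrefix.prefix_of_length_le (hu : StreamPrefix u x) (hv : StreamPrefix v x)
    (hle : u.length ≤ v.length) : u <+: v := by
  rw [List.prefix_iff_getElem]
  exact ⟨hle, fun i hi => (hu ⟨i, hi⟩).trans (hv ⟨i, hi.trans_le hle⟩).symm⟩

theorem StreamPrefix.prefix_or_prefix (hu : StreamPrefix u x) (hv : StreamPrefix v x) :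
    u <+: v ∨ v <+: u :=
  (le_total u.length v.length).imp (hu.prefix_of_length_le hv) (hv.prefix_of_length_le hu)

theorem StreamPrefix.eq_replicate {b : Bool} (hu : StreamPrefix u fun _ => b) :
    u = List.replicate u.length b :=
  List.ext_getElem (by simp) fun i hi _ => by simpa using hu ⟨i, hi⟩

theorem exists_streamPrefix (u : List Bool) : ∃ x, StreamPrefix u x :=
  ⟨fun i => u.getD i false, fun i => by simp⟩

end StreamPrefix

section Tree

variable {W : Finset (List Bool)} {w : List Bool}

theorem IsTree.isAntichain (hW : IsTree W) : IsAntichain (· <+: ·) (W : Set (List Bool)) := by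
  intro u hu v hv hne huv
  obtain ⟨x, hvx⟩ := exists_streamPrefix v
  exact hne ((hW x).unique ⟨hu, hvx.of_prefix huv⟩ ⟨hv, hvx⟩)

theorem IsTree.exists_prefix_or_prefix (hW : IsTree W) (t : List Bool) :
    ∃ w ∈ W, w <+: t ∨ t <+: w := by
  obtain ⟨x, htx⟩ := exists_streamPrefix t
  obtain ⟨w, hw, hwx⟩ := (hW x).exists
  exact ⟨w, hw, hwx.prefix_or_prefix htx⟩

theorem IsTree.exists_replicate_mem (hW : IsTree W) (b : Bool) :
    ∃ n, List.replicate n b ∈ W := by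
  obtain ⟨w, hw, hwb⟩ := (hW fun _ => b).exists
  exact ⟨w.length, hwb.eq_replicate ▸ hw⟩

theorem IsTree.exists_mem_lexLt (hW : IsTree W) (hw : true ∈ w) : ∃ a ∈ W, lexLt a w := by
  obtain ⟨n, hn⟩ := hW.exists_replicate_mem false
  exact ⟨_, hn, replicate_false_lexLt n hw⟩

theorem IsTree.exists_mem_lexGt (hW : IsTree W) (hwW : w ∈ W) (hw : false ∈ w) :
    ∃ b ∈ W, lexLt w b := by
  obtain ⟨n, hn⟩ := hW.exists_replicate_mem true
  refine ⟨_, hn, lexLt_replicate_true fun hprefix => ?_⟩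
  have heq : List.replicate n true = w := hW.isAntichain.eq hn hwW hprefix
  simp [← heq] at hw

end Tree

section Quotient

variable {T W : Finset (List Bool)} {p u v : List Bool}

theorem card_treeQuot (T : Finset (List Bool)) (u : List Bool) :
    (treeQuot T u).card = (T.filter (u <+: ·)).card := by
  refine Finset.card_image_of_injOn fun a ha b hb hab => ?_
  obtain ⟨r, rfl⟩ := (Finset.mem_filter.1 ha).2
  obtain ⟨s, rfl⟩ := (Finset.mem_filter.1 hb).2
  simpa using hab

theorem card_treeQuot_le_of_prefix (T : Finset (List Bool)) (h : u <+: v) :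
    (treeQuot T v).card ≤ (treeQuot T u).card := by
  simp only [card_treeQuot]
  exact Finset.card_le_card (Finset.monotone_filter_right T fun _ _ => h.trans)

theorem card_treeQuot_pos (h : ∃ t ∈ T, u <+: t) : 0 < (treeQuot T u).card := by
  rwa [card_treeQuot, Finset.card_pos, Finset.filter_nonempty_iff]

theorem ContainedIn.exists_prefix_of_mem (hcont : ContainedIn W T) (hW : IsTree W)
    (hT : IsAntichain (· <+: ·) (T : Set (List Bool))) {t : List Bool} (ht : t ∈ T) :
    ∃ w ∈ W, w <+: t := by
  obtain ⟨w, hw, hwt | htw⟩ := hW.exists_prefix_or_prefix t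
  · exact ⟨w, hw, hwt⟩
  · obtain ⟨t', ht', hwt'⟩ := hcont w hw
    have heq : t = t' := hT.eq ht ht' (htw.trans hwt')
    exact ⟨w, hw, heq ▸ hwt'⟩

theorem ContainedIn.card_treeQuot_le_sum (hcont : ContainedIn W T) (hW : IsTree W)
    (hT : IsAntichain (· <+: ·) (T : Set (List Bool))) (hp : ∃ w ∈ W, p <+: w) :
    (treeQuot T p).card ≤ ∑ w ∈ W with p <+: w, (treeQuot T w).card := by
  simp only [card_treeQuot]
  refine (Finset.card_le_card fun t ht => ?_).trans Finset.card_biUnion_le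
  obtain ⟨htT, hpt⟩ := Finset.mem_filter.1 ht
  obtain ⟨w, hw, hwt⟩ := hcont.exists_prefix_of_mem hW hT htT
  have hpw : p <+: w := by
    rcases List.prefix_or_prefix_of_prefix hpt hwt with hpw | hwp
    · exact hpw
    · obtain ⟨w', hw', hpw'⟩ := hp
      have heq : w = w' := hW.isAntichain.eq hw hw' (hwp.trans hpw')
      exact heq ▸ hpw'
  exact Finset.mem_biUnion.2
    ⟨w, Finset.mem_filter.2 ⟨hw, hpw⟩, Finset.mem_filter.2 ⟨htT, hwt⟩⟩

end Quotient

theorem quot_card_lt_of_monotone_general {T W : Finset (List Bool)} {p q : List Bool}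
    (hT : IsAntichain (· <+: ·) (T : Set (List Bool))) (hW : IsTree W) (hcont : ContainedIn W T)
    (hlt : lexLt p q) (hpq : ¬ p <+: q) (hp : true ∈ p) (hq : false ∈ q)
    (hpW : ∃ w ∈ W, p <+: w) (hqW : ∃ w ∈ W, q <+: w)
    (hmono : ∀ u v, IsInterior W u → IsInterior W v → lexLt u v →
      2 * (treeQuot T u).card ≤ (treeQuot T v).card) :
    (treeQuot T p).card < (treeQuot T q).card := by
  obtain ⟨v, hv, hqv⟩ := hqW
  have hlt_v {u : List Bool} (hpu : p <+: u) : lexLt u v :=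
    lexLt_of_prefix_of_prefix hlt hpq hpu hqv
  have hv_int : IsInterior W v :=
    ⟨hv, hpW.imp fun _ h => ⟨h.1, hlt_v h.2⟩, hW.exists_mem_lexGt hv (hqv.subset hq)⟩
  have hu_int : ∀ u ∈ W.filter (p <+: ·), IsInterior W u := by
    intro u hu
    obtain ⟨huW, hpu⟩ := Finset.mem_filter.1 hu
    exact ⟨huW, hW.exists_mem_lexLt (hpu.subset hp), v, hv, hlt_v hpu⟩
  calc (treeQuot T p).card
      ≤ ∑ u ∈ W with p <+: u, (treeQuot T u).card := hcont.card_treeQuot_le_sum hW hT hpW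
    _ < (treeQuot T v).card :=
        sum_lt_of_two_nsmul_le (f := fun u => (treeQuot T u).card) (s := {u | IsInterior W u})
          (fun u hu => card_treeQuot_pos (hcont u hu.1)) (fun u hu v hv => hmono u v hu hv)
          hu_int hv_int fun u hu => hlt_v (Finset.mem_filter.1 hu).2
    _ ≤ (treeQuot T q).card := card_treeQuot_le_of_prefix T hqv

/-- If `W` is a tree contained in `T`, contains extensions of both `⟨0,1⟩` and `⟨1,0⟩`,
and `2|T/u| ≤ |T/v|` holds for all interior elements `u <_lex v` of `W`, then
`|T/⟨0,1⟩| < |T/⟨1,0⟩|`. -/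
theorem quot_card_lt_of_monotone (T W : Finset (List Bool))
    (hT : IsTree T) (hW : IsTree W) (hcont : ContainedIn W T)
    (h01 : ∃ w ∈ W, [false, true] <+: w) (h10 : ∃ w ∈ W, [true, false] <+: w)
    (hmono : ∀ u v, IsInterior W u → IsInterior W v → lexLt u v →
      2 * (treeQuot T u).card ≤ (treeQuot T v).card) :
    (treeQuot T [false, true]).card < (treeQuot T [true, false]).card := by
  exact quot_card_lt_of_monotone_general hT.isAntichain hW hcont (List.Lex.rel Bool.false_lt_true)
    (by decide) (by decide) (by decide) h01 h10 hmono
end
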